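/- arXiv:2206.00606 — 2 statements merged into one kernel-verified Lean document; each statement's English description precedes it below -/
import Mathlib

section
/- Let G₁ ∈ ℝ^{m×n₁}, G₂ ∈ ℝ^{m×n₂}, H₁ ∈ ℝ^{n₁×d₁}, H₂ ∈ ℝ^{n₂×d₂}, W₁ ∈ ℝ^{d₁×d'}, W₂ ∈ ℝ^{d₂×d'}, and let β : ℝ → ℝ be applied entrywise to matrices. For any permutations σ of {1, …, m}, τ₁ of {1, …, n₁} and τ₂ of {1, …, n₂}, with permutation matrices P_σ, P_{τ₁}, P_{τ₂}, one has β( (P_σ G₁ P_{τ₁}ᵀ)(P_{τ₁} H₁) W₁ + (P_σ G₂ P_{τ₂}ᵀ)(P_{τ₂} H₂) W₂ ) = P_σ · β( G₁ H₁ W₁ + G₂ H₂ W₂ ). Hence the CC-convolutional merge node is a permutation-equivariant merge node. -/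
open Matrix

/-- The permutation matrix of a permutation `σ` of a finite index set `I`:
entry `(a, b)` is `1` if `a = σ b` and `0` otherwise. -/
def permMat {I : Type*} [Fintype I] [DecidableEq I] (σ : Equiv.Perm I) : Matrix I I ℝ :=
  fun a b => if a = σ b then 1 else 0

/-!
The inner factor `P_τᵀ P_τ = 1` cancels, so each summand is multiplied by `P_σ` on the left. This
only permutes rows, hence commutes with any entrywise map, linear or not.
-/

section

variable {l m n d o R S : Type*} [Fintype m] [DecidableEq m] [Fintype n] [DecidableEq n]

-- Mathlib's `Equiv.Perm.permMatrix` puts its ones at `(i, σ i)`, `permMat` at `(σ i, i)`.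
theorem permMat_eq_permMatrix_inv (σ : Equiv.Perm n) : permMat σ = σ⁻¹.permMatrix ℝ := by
  ext i j
  simp [permMat, Equiv.Perm.permMatrix, PEquiv.toMatrix_apply, Equiv.symm_apply_eq]

theorem transpose_permMatrix_mul_self [NonAssocSemiring R] (σ : Equiv.Perm n) :
    (σ.permMatrix R)ᵀ * σ.permMatrix R = 1 := by
  rw [transpose_permMatrix, ← permMatrix_mul, mul_inv_cancel, permMatrix_one]

theorem map_permMatrix_mul [NonAssocSemiring R] [NonAssocSemiring S] (f : R → S)
    (σ : Equiv.Perm n) (A : Matrix n o R) :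
    (σ.permMatrix R * A).map f = σ.permMatrix S * A.map f := by
  rw [PEquiv.toMatrix_toPEquiv_mul, PEquiv.toMatrix_toPEquiv_mul, submatrix_map]

theorem mul_transpose_permMatrix_mul_permMatrix_mul [Semiring R] (G : Matrix l n R)
    (H : Matrix n o R) (τ : Equiv.Perm n) :
    G * (τ.permMatrix R)ᵀ * (τ.permMatrix R * H) = G * H := by
  rw [Matrix.mul_assoc, ← Matrix.mul_assoc _ _ H, transpose_permMatrix_mul_self, Matrix.one_mul]

theorem cochain_convolution_equivariant [Semiring R] [Fintype d] (G : Matrix m n R)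
    (H : Matrix n d R) (W : Matrix d o R) (σ : Equiv.Perm m) (τ : Equiv.Perm n) :
    (σ.permMatrix R * G * (τ.permMatrix R)ᵀ) * (τ.permMatrix R * H) * W =
      σ.permMatrix R * (G * H * W) := by
  rw [mul_transpose_permMatrix_mul_permMatrix_mul, Matrix.mul_assoc _ G, Matrix.mul_assoc]

end

theorem stmt_12_general {R S m n₁ n₂ d₁ d₂ d' : Type*} [Semiring R] [NonAssocSemiring S]
    [Fintype m] [DecidableEq m] [Fintype n₁] [DecidableEq n₁] [Fintype n₂] [DecidableEq n₂]
    [Fintype d₁] [Fintype d₂]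
    (G₁ : Matrix m n₁ R) (G₂ : Matrix m n₂ R) (H₁ : Matrix n₁ d₁ R) (H₂ : Matrix n₂ d₂ R)
    (W₁ : Matrix d₁ d' R) (W₂ : Matrix d₂ d' R) (β : R → S)
    (σ : Equiv.Perm m) (τ₁ : Equiv.Perm n₁) (τ₂ : Equiv.Perm n₂) :
    ((σ.permMatrix R * G₁ * (τ₁.permMatrix R)ᵀ) * (τ₁.permMatrix R * H₁) * W₁ +
      (σ.permMatrix R * G₂ * (τ₂.permMatrix R)ᵀ) * (τ₂.permMatrix R * H₂) * W₂).map β =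
    σ.permMatrix S * ((G₁ * H₁ * W₁ + G₂ * H₂ * W₂).map β) := by
  rw [cochain_convolution_equivariant, cochain_convolution_equivariant, ← Matrix.mul_add,
    map_permMatrix_mul]

/-- The CC-convolutional merge node
`(H₁, H₂) ↦ β(G₁ H₁ W₁ + G₂ H₂ W₂)` (with activation `β` applied entrywise) is a
permutation-equivariant merge node: transforming the cochain maps by
`G_i ↦ P_σ G_i P_{τ_i}ᵀ` and the inputs by `H_i ↦ P_{τ_i} H_i` multiplies the output
by `P_σ`. -/
theorem stmt_12 {m n₁ n₂ d₁ d₂ d' : ℕ}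
    (G₁ : Matrix (Fin m) (Fin n₁) ℝ) (G₂ : Matrix (Fin m) (Fin n₂) ℝ)
    (H₁ : Matrix (Fin n₁) (Fin d₁) ℝ) (H₂ : Matrix (Fin n₂) (Fin d₂) ℝ)
    (W₁ : Matrix (Fin d₁) (Fin d') ℝ) (W₂ : Matrix (Fin d₂) (Fin d') ℝ)
    (β : ℝ → ℝ)
    (σ : Equiv.Perm (Fin m)) (τ₁ : Equiv.Perm (Fin n₁)) (τ₂ : Equiv.Perm (Fin n₂)) :
    ((permMat σ * G₁ * (permMat τ₁)ᵀ) * (permMat τ₁ * H₁) * W₁ +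
      (permMat σ * G₂ * (permMat τ₂)ᵀ) * (permMat τ₂ * H₂) * W₂).map β =
    permMat σ * ((G₁ * H₁ * W₁ + G₂ * H₂ * W₂).map β) := by
  simp only [permMat_eq_permMatrix_inv]
  exact stmt_12_general G₁ G₂ H₁ H₂ W₁ W₂ β σ⁻¹ τ₁⁻¹ τ₂⁻¹
end

section
/- Let G₁ ∈ ℝ^{m×n₁}, G₂ ∈ ℝ^{m×n₂}, H₁ ∈ ℝ^{n₁×d₁}, H₂ ∈ ℝ^{n₂×d₂}, W₁ ∈ ℝ^{d₁×d'}, W₂ ∈ ℝ^{d₂×d'}. Let D₀ ∈ ℝ^{m×m}, D₁ ∈ ℝ^{n₁×n₁}, D₂ ∈ ℝ^{n₂×n₂} be diagonal matrices all of whose diagonal entries are ±1, and let β : ℝ → ℝ be an odd function (β(−t) = −β(t)) applied entrywise. Then β( (D₀ G₁ D₁)(D₁ H₁) W₁ + (D₀ G₂ D₂)(D₂ H₂) W₂ ) = D₀ · β( G₁ H₁ W₁ + G₂ H₂ W₂ ). In particular each D_i satisfies D_i² = I, and the CC-convolutional merge node with odd activation is an orientation-equivariant merge node. -/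
open Matrix

/-! Since `D₁` and `D₂` are involutions, they cancel between the cochain maps and the inputs, and
`D₀` factors out of the sum. As `D₀` only flips the signs of some rows, the odd activation
commutes with it. -/

section

variable {R m n n₁ n₂ k k₁ k₂ l : Type*}

/-- A signed diagonal matrix: diagonal, with diagonal entries `±1`. These are the changes of
orientation of a space of cochains. -/
structure IsSignedDiagonal [Ring R] (D : Matrix n n R) : Prop where
  isDiag : D.IsDiag
  diag_eq_one_or_neg_one : ∀ i, D i i = 1 ∨ D i i = -1

/-- The CC-convolutional merge node with activation `β`, trainable parameters `W₁`, `W₂` and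
cochain maps `G₁`, `G₂`. The parameters come first, so that fixing them leaves a function of
the cochain maps and the inputs, on which the orientation action is defined. -/
def ccMergeNode [Ring R] [Fintype n₁] [Fintype n₂] [Fintype k₁] [Fintype k₂] (β : R → R)
    (W₁ : Matrix k₁ l R) (W₂ : Matrix k₂ l R) (G₁ : Matrix m n₁ R) (G₂ : Matrix m n₂ R)
    (H₁ : Matrix n₁ k₁ R) (H₂ : Matrix n₂ k₂ R) : Matrix m l R :=
  (G₁ * H₁ * W₁ + G₂ * H₂ * W₂).map β

/-- Orientation equivariance of a merge node, given as a function of its cochain maps and its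
inputs: reorienting the sources and the target multiplies the output by the signed diagonal
matrix of the target. -/
def IsOrientationEquivariant [Ring R] [Fintype m] [Fintype n₁] [Fintype n₂]
    (M : Matrix m n₁ R → Matrix m n₂ R → Matrix n₁ k₁ R → Matrix n₂ k₂ R → Matrix m l R) : Prop :=
  ∀ ⦃D₀ : Matrix m m R⦄ ⦃D₁ : Matrix n₁ n₁ R⦄ ⦃D₂ : Matrix n₂ n₂ R⦄,
    IsSignedDiagonal D₀ → IsSignedDiagonal D₁ → IsSignedDiagonal D₂ →
      ∀ G₁ G₂ H₁ H₂,
        M (D₀ * G₁ * D₁) (D₀ * G₂ * D₂) (D₁ * H₁) (D₂ * H₂) = D₀ * M G₁ G₂ H₁ H₂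

theorem mul_apply_of_isDiag [NonUnitalNonAssocSemiring R] [Fintype n] {D : Matrix n n R}
    (hD : D.IsDiag) (M : Matrix n k R) (i : n) (j : k) : (D * M) i j = D i i * M i j := by
  classical
  rw [← hD.diagonal_diag, diagonal_mul, diagonal_apply_eq]

theorem mul_mul_mul_cancel_of_mul_eq_one [Semiring R] [Fintype n] [DecidableEq n]
    {D E : Matrix n n R} (hED : E * D = 1) (A : Matrix m n R) (H : Matrix n k R) :
    A * E * (D * H) = A * H := by
  rw [Matrix.mul_assoc, ← Matrix.mul_assoc E, hED, Matrix.one_mul]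

variable [Ring R]

theorem isSignedDiagonal_diagonal [DecidableEq n] {d : n → R} (hd : ∀ i, d i = 1 ∨ d i = -1) :
    IsSignedDiagonal (diagonal d) where
  isDiag := isDiag_diagonal d
  diag_eq_one_or_neg_one i := by simpa only [diagonal_apply_eq] using hd i

namespace IsSignedDiagonal

variable [Fintype n] {D : Matrix n n R}

theorem mul_self [DecidableEq n] (hD : IsSignedDiagonal D) : D * D = 1 := by
  ext i j
  rw [mul_apply_of_isDiag hD.isDiag]
  obtain rfl | hij := eq_or_ne i j
  · obtain h | h := hD.diag_eq_one_or_neg_one i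
    · rw [h, one_mul, one_apply_eq]
    · rw [h, neg_mul_neg, one_mul, one_apply_eq]
  · rw [hD.isDiag hij, mul_zero, one_apply_ne hij]

theorem map_mul (hD : IsSignedDiagonal D) {β : R → R} (hβ : β.Odd) (M : Matrix n k R) :
    (D * M).map β = D * M.map β := by
  ext i j
  rw [map_apply, mul_apply_of_isDiag hD.isDiag, mul_apply_of_isDiag hD.isDiag, map_apply]
  obtain h | h := hD.diag_eq_one_or_neg_one i
  · rw [h, one_mul, one_mul]
  · rw [h, neg_one_mul, neg_one_mul, hβ]

end IsSignedDiagonal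

variable [Fintype m] [Fintype n₁] [Fintype n₂] [Fintype k₁] [Fintype k₂]

theorem isOrientationEquivariant_ccMergeNode {β : R → R} (hβ : β.Odd)
    (W₁ : Matrix k₁ l R) (W₂ : Matrix k₂ l R) :
    IsOrientationEquivariant (m := m) (n₁ := n₁) (n₂ := n₂) (ccMergeNode β W₁ W₂) := by
  classical
  intro D₀ D₁ D₂ h₀ h₁ h₂ G₁ G₂ H₁ H₂
  calc
    _ = (D₀ * G₁ * H₁ * W₁ + D₀ * G₂ * H₂ * W₂).map β := by
      rw [ccMergeNode, mul_mul_mul_cancel_of_mul_eq_one h₁.mul_self,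
        mul_mul_mul_cancel_of_mul_eq_one h₂.mul_self]
    _ = (D₀ * (G₁ * H₁ * W₁ + G₂ * H₂ * W₂)).map β := by
      simp only [Matrix.mul_add, Matrix.mul_assoc]
    _ = D₀ * ccMergeNode β W₁ W₂ G₁ G₂ H₁ H₂ := h₀.map_mul hβ _

theorem stmt_13_general [DecidableEq m] [DecidableEq n₁] [DecidableEq n₂]
    {D₀ : Matrix m m R} {D₁ : Matrix n₁ n₁ R} {D₂ : Matrix n₂ n₂ R}
    (h₀ : IsSignedDiagonal D₀) (h₁ : IsSignedDiagonal D₁) (h₂ : IsSignedDiagonal D₂)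
    {β : R → R} (hβ : β.Odd) (G₁ : Matrix m n₁ R) (G₂ : Matrix m n₂ R)
    (H₁ : Matrix n₁ k₁ R) (H₂ : Matrix n₂ k₂ R) (W₁ : Matrix k₁ l R) (W₂ : Matrix k₂ l R) :
    (D₀ * D₀ = 1 ∧ D₁ * D₁ = 1 ∧ D₂ * D₂ = 1) ∧
      ((D₀ * G₁ * D₁) * (D₁ * H₁) * W₁ + (D₀ * G₂ * D₂) * (D₂ * H₂) * W₂).map β =
        D₀ * ((G₁ * H₁ * W₁ + G₂ * H₂ * W₂).map β) :=
  ⟨⟨h₀.mul_self, h₁.mul_self, h₂.mul_self⟩,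
    isOrientationEquivariant_ccMergeNode hβ W₁ W₂ h₀ h₁ h₂ G₁ G₂ H₁ H₂⟩

end

/-- Let `D₀, D₁, D₂` be signed diagonal matrices (diagonal entries
`±1`) and `β` an odd activation applied entrywise. Then each `D_i` squares to the
identity, and the CC-convolutional merge node `(H₁, H₂) ↦ β(G₁ H₁ W₁ + G₂ H₂ W₂)` is
orientation equivariant:
`β((D₀ G₁ D₁)(D₁ H₁) W₁ + (D₀ G₂ D₂)(D₂ H₂) W₂) = D₀ β(G₁ H₁ W₁ + G₂ H₂ W₂)`. -/
theorem stmt_13 {m n₁ n₂ d₁ d₂ d' : ℕ}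
    (G₁ : Matrix (Fin m) (Fin n₁) ℝ) (G₂ : Matrix (Fin m) (Fin n₂) ℝ)
    (H₁ : Matrix (Fin n₁) (Fin d₁) ℝ) (H₂ : Matrix (Fin n₂) (Fin d₂) ℝ)
    (W₁ : Matrix (Fin d₁) (Fin d') ℝ) (W₂ : Matrix (Fin d₂) (Fin d') ℝ)
    (d₀ : Fin m → ℝ) (d₁v : Fin n₁ → ℝ) (d₂v : Fin n₂ → ℝ)
    (h₀ : ∀ i, d₀ i = 1 ∨ d₀ i = -1)
    (h₁ : ∀ i, d₁v i = 1 ∨ d₁v i = -1)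
    (h₂ : ∀ i, d₂v i = 1 ∨ d₂v i = -1)
    (D₀ : Matrix (Fin m) (Fin m) ℝ) (hD₀ : D₀ = Matrix.diagonal d₀)
    (D₁ : Matrix (Fin n₁) (Fin n₁) ℝ) (hD₁ : D₁ = Matrix.diagonal d₁v)
    (D₂ : Matrix (Fin n₂) (Fin n₂) ℝ) (hD₂ : D₂ = Matrix.diagonal d₂v)
    (β : ℝ → ℝ) (hβ : ∀ t : ℝ, β (-t) = -β t) :
    (D₀ * D₀ = 1 ∧ D₁ * D₁ = 1 ∧ D₂ * D₂ = 1) ∧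
    ((D₀ * G₁ * D₁) * (D₁ * H₁) * W₁ + (D₀ * G₂ * D₂) * (D₂ * H₂) * W₂).map β =
      D₀ * ((G₁ * H₁ * W₁ + G₂ * H₂ * W₂).map β) := by
  subst hD₀ hD₁ hD₂
  exact stmt_13_general (isSignedDiagonal_diagonal h₀) (isSignedDiagonal_diagonal h₁)
    (isSignedDiagonal_diagonal h₂) hβ G₁ G₂ H₁ H₂ W₁ W₂
end
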